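/- (Theorem 2) Let q be a mask distribution on M with support S_q = {m ∈ M : q(m) > 0}, and fix τ ∈ P. For x₁, x₂ : I → ℝ, the masked images coincide, T_{q,τ} x₁ = T_{q,τ} x₂, if and only if x₁ and x₂ have the same marginals on every supported mask: x₁([v]_m) = x₂([v]_m) for all v ∈ I and all m ∈ S_q. -/

import Mathlib

/-!
The marginals of `T q τ x` are combinations of marginals of `x`: for a mask `k`,
`(T q τ x)([v]_k) = ∑ q m * x([v]_{m ⊓ k})`, the sum being over the masks `m` such that `v = τ` on
`k` off `m` (`marg_T`). For `k = ⊤` this expresses `T q τ x` itself through the marginals of `x` on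
supported masks, which gives the implication from right to left.

Conversely, suppose `T q τ x₁ = T q τ x₂`. By well-founded induction on `k`, the marginals of `x₁`
and `x₂` on `k` agree for every `k` lying below a supported mask: in the formula above, the terms
with `m ⊓ k < k` agree by induction, and the remaining ones (`k ≤ m`) add up to
`(∑_{m ≥ k} q m) * x([v]_k)`, whose coefficient is positive because `k` lies below a supported mask.
-/

open Finset
open scoped Classical

/-- The transition operator `T_{q,τ}`: for a mask distribution `q` on masks
`Fin n → Bool`, a fill-in value `τ`, and `x : (Fin n → P) → ℝ`,
`(T q τ x) v = ∑_{m} ∑_{u} q m * x u * [f_τ(u, m) = v]`, where the masking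
operator is `f_τ(u,m) d = if m d then u d else τ`. -/
noncomputable def T {n : ℕ} {P : Type*} [Fintype P] [DecidableEq P]
    (q : (Fin n → Bool) → ℝ) (τ : P) (x : (Fin n → P) → ℝ) : (Fin n → P) → ℝ :=
  fun v => ∑ m : Fin n → Bool, ∑ u : Fin n → P,
    q m * x u * (if (fun d => if m d then u d else τ) = v then (1 : ℝ) else 0)

/-- The marginal `x([v]_m) = ∑_{u ∈ [v]_m} x u`, where `u ∈ [v]_m` iff
`u` agrees with `v` on every coordinate observed by the mask `m`. -/
noncomputable def marg {n : ℕ} {P : Type*} [Fintype P] [DecidableEq P]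
    (x : (Fin n → P) → ℝ) (m : Fin n → Bool) (v : Fin n → P) : ℝ :=
  ∑ u : Fin n → P, if (∀ d, m d = true → v d = u d) then x u else 0

lemma marg_top {n : ℕ} {P : Type*} [Fintype P] [DecidableEq P]
    (x : (Fin n → P) → ℝ) (v : Fin n → P) : marg x ⊤ v = x v := by
  simp [marg, ← funext_iff]

lemma marg_T {n : ℕ} {P : Type*} [Fintype P] [DecidableEq P]
    (q : (Fin n → Bool) → ℝ) (τ : P) (x : (Fin n → P) → ℝ) (k : Fin n → Bool) (v : Fin n → P) :
    marg (T q τ x) k v = ∑ m : Fin n → Bool,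
      q m * (if ∀ d, k d = true → m d = false → v d = τ then marg x (m ⊓ k) v else 0) := by
  have h1 : marg (T q τ x) k v = ∑ w : Fin n → P, ∑ m : Fin n → Bool, ∑ u : Fin n → P,
      if (fun d => if m d then u d else τ) = w then
        (if ∀ d, k d = true → v d = w d then q m * x u else 0) else 0 := by
    unfold marg T
    refine Finset.sum_congr rfl fun w _ => ?_
    split_ifs with h
    · simp
    · simp
  rw [h1, Finset.sum_comm]
  refine Finset.sum_congr rfl fun m _ => ?_
  rw [Finset.sum_comm]
  simp only [Finset.sum_ite_eq, Finset.mem_univ, if_true]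
  -- `f_τ(u, m) ~_k v` means that `u` agrees with `v` on `m ⊓ k` and `v = τ` on `k` off `m`.
  have key : ∀ u : Fin n → P, (∀ d, k d = true → v d = if m d then u d else τ) ↔
      (∀ d, k d = true → m d = false → v d = τ) ∧ ∀ d, (m ⊓ k) d = true → v d = u d := by
    intro u
    rw [← forall_and]
    refine forall_congr' fun d => ?_
    cases hk : k d <;> cases hm : m d <;> simp [hk, hm]
  simp only [key]
  split_ifs with h
  · simp only [marg, Finset.mul_sum, mul_ite, mul_zero]
    refine Finset.sum_congr rfl fun u _ => ?_
    exact if_congr (and_iff_right h) rfl rfl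
  · rw [mul_zero]
    exact Finset.sum_eq_zero fun u _ => if_neg fun hu => h hu.1

/-- The induction proving that `T q τ x` determines the marginals of `x` on all masks below a
supported one. -/
lemma marg_eq_of_T_eq {n : ℕ} {P : Type*} [Fintype P] [DecidableEq P]
    (q : (Fin n → Bool) → ℝ) (hq0 : ∀ m, 0 ≤ q m) (τ : P) (x₁ x₂ : (Fin n → P) → ℝ)
    (hT : T q τ x₁ = T q τ x₂) (k : Fin n → Bool) :
    ∀ m₀, 0 < q m₀ → k ≤ m₀ → ∀ v, marg x₁ k v = marg x₂ k v := by
  induction k using WellFoundedLT.induction with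
  | ind k ih =>
    intro m₀ hm₀ hk v
    have h : marg (T q τ x₁) k v = marg (T q τ x₂) k v := by rw [hT]
    rw [marg_T, marg_T, ← sub_eq_zero, ← Finset.sum_sub_distrib] at h
    have h2 : ∑ m : Fin n → Bool,
        (if k ≤ m then q m else 0) * (marg x₁ k v - marg x₂ k v) = 0 := by
      refine Eq.trans (Finset.sum_congr rfl fun m _ => ?_) h
      by_cases hkm : k ≤ m
      · -- the condition on `v` is void, since no coordinate of `k` is off `m`
        have hc : ∀ d, k d = true → m d = false → v d = τ := by
          intro d h1 h2
          have : k d ≤ m d := hkm d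
          rw [h1, h2] at this
          exact absurd this (by decide)
        rw [if_pos hc, if_pos hc, if_pos hkm, inf_eq_right.2 hkm]
        ring
      · have hlt : m ⊓ k < k := inf_lt_right.2 hkm
        rw [ih _ hlt m₀ hm₀ (hlt.le.trans hk) v, if_neg hkm]
        ring
    rw [← Finset.sum_mul] at h2
    have hpos : 0 < ∑ m : Fin n → Bool, (if k ≤ m then q m else 0) := by
      refine Finset.sum_pos' (fun m _ => ?_) ⟨m₀, Finset.mem_univ _, ?_⟩
      · split_ifs
        exacts [hq0 m, le_rfl]
      · rwa [if_pos hk]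
    exact sub_eq_zero.1 ((mul_eq_zero.1 h2).resolve_left (ne_of_gt hpos))

/-- Theorem 2: the masked images coincide iff the marginals agree on every
supported mask. -/
theorem stmt5 {n : ℕ} (hn : 1 ≤ n) {P : Type*} [Fintype P] [Nonempty P] [DecidableEq P]
    (q : (Fin n → Bool) → ℝ) (hq0 : ∀ m, 0 ≤ q m)
    (hq1 : (∑ m : Fin n → Bool, q m) = 1)
    (τ : P) (x₁ x₂ : (Fin n → P) → ℝ) :
    T q τ x₁ = T q τ x₂ ↔
      ∀ (v : Fin n → P) (m : Fin n → Bool), 0 < q m → marg x₁ m v = marg x₂ m v := by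
  constructor
  · intro hT v m hm
    exact marg_eq_of_T_eq q hq0 τ x₁ x₂ hT m m hm le_rfl v
  · intro h
    funext v
    rw [← marg_top (T q τ x₁), ← marg_top (T q τ x₂), marg_T, marg_T]
    refine Finset.sum_congr rfl fun m _ => ?_
    rcases (hq0 m).eq_or_lt with h0 | h0
    · simp [← h0]
    · rw [inf_top_eq, h v m h0]
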